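/- Let α = (X_g, α_g)_{g∈G} be a partial action of a groupoid G on a set X, and suppose the global action β = (Y_g, β_g)_{g∈G} of G on Y is a globalization of α (with X ⊆ Y and i the inclusion). Then α is free if and only if β is free. -/

import Mathlib

universe u v w

/-- A groupoid as an algebraic structure: a set `G` with a (totalized) partially
defined multiplication, inversion, source `d` and range `r`.  The product `mul g h`
is only meaningful when `d g = r h`. -/
structure SetGroupoid (G : Type u) where
  mul : G → G → G
  inv : G → G
  d : G → G
  r : G → G
  inv_inv : ∀ g, inv (inv g) = g
  d_inv : ∀ g, d (inv g) = r g
  r_inv : ∀ g, r (inv g) = d g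
  mul_d_self : ∀ g, mul g (d g) = g
  r_mul_self : ∀ g, mul (r g) g = g
  inv_mul : ∀ g, mul (inv g) g = d g
  mul_inv : ∀ g, mul g (inv g) = r g
  d_mul : ∀ g h, d g = r h → d (mul g h) = d h
  r_mul : ∀ g h, d g = r h → r (mul g h) = r g
  mul_assoc : ∀ g h k, d g = r h → d h = r k → mul (mul g h) k = mul g (mul h k)
  d_idem : ∀ g, d (d g) = d g
  r_d : ∀ g, r (d g) = d g

/-- A (set theoretical) partial action of a groupoid `G` on a set `X`:
subsets `D g = X_g` and (totalized) bijections `act g : X_{g⁻¹} → X_g`, together with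
the anchor map sending `x` to the unique identity `e` with `x ∈ X_e`. -/
structure PartialAction {G : Type u} (𝒢 : SetGroupoid G) (X : Type v) where
  D : G → Set X
  act : G → X → X
  anchor : X → G
  anchor_isUnit : ∀ x, 𝒢.d (anchor x) = anchor x
  mem_anchor : ∀ x, x ∈ D (anchor x)
  anchor_unique : ∀ x e, 𝒢.d e = e → x ∈ D e → e = anchor x
  D_subset : ∀ g, D g ⊆ D (𝒢.r g)
  act_unit : ∀ e, 𝒢.d e = e → ∀ x ∈ D e, act e x = x
  act_mem : ∀ g, ∀ x ∈ D (𝒢.inv g), act g x ∈ D g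
  act_act : ∀ g, ∀ x ∈ D (𝒢.inv g), act (𝒢.inv g) (act g x) = x
  act_comp_mem : ∀ g h, 𝒢.d g = 𝒢.r h → ∀ x, x ∈ D (𝒢.inv g) → x ∈ D h →
      act g x ∈ D (𝒢.mul g h)
  act_comp : ∀ g h, 𝒢.d g = 𝒢.r h → ∀ x, x ∈ D (𝒢.inv h) → act h x ∈ D (𝒢.inv g) →
      act g (act h x) = act (𝒢.mul g h) x

namespace PartialAction

variable {G : Type u} {X : Type v} {𝒢 : SetGroupoid G}

/-- A partial action is global if `α_{gh} = α_g ∘ α_h` (as partial maps, including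
equality of domains) for every composable pair `(g,h) ∈ G²`. -/
def IsGlobal (α : PartialAction 𝒢 X) : Prop :=
  ∀ g h, 𝒢.d g = 𝒢.r h →
    ((∀ x, x ∈ α.D (𝒢.inv (𝒢.mul g h)) ↔ x ∈ α.D (𝒢.inv h) ∧ α.act h x ∈ α.D (𝒢.inv g)) ∧
      ∀ x ∈ α.D (𝒢.inv (𝒢.mul g h)), α.act (𝒢.mul g h) x = α.act g (α.act h x))

/-- Transitivity: some point has orbit equal to all of `X`. -/
def Transitive (α : PartialAction 𝒢 X) : Prop :=
  ∃ x : X, ∀ y : X, ∃ g, x ∈ α.D (𝒢.inv g) ∧ y = α.act g x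

/-- Freeness: every stabilizer reduces to the anchor identity. -/
def Free (α : PartialAction 𝒢 X) : Prop :=
  ∀ (x : X) (g : G), x ∈ α.D (𝒢.inv g) → α.act g x = x → g = α.anchor x

end PartialAction

/-- `β` (a global action of `G` on `Y`) is a globalization of the partial action `α`
of `G` on `X`, via the injection `i : X → Y`. -/
structure IsGlobalization {G : Type u} {X : Type v} {Y : Type w} {𝒢 : SetGroupoid G}
    (α : PartialAction 𝒢 X) (β : PartialAction 𝒢 Y) (i : X → Y) : Prop where
  global : β.IsGlobal
  inj : Function.Injective i
  cond_i : ∀ g, i '' α.D g = Set.range i ∩ β.act g '' (Set.range i ∩ β.D (𝒢.inv g))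
  cond_ii : ∀ g, ∀ x ∈ α.D (𝒢.inv g), β.act g (i x) = i (α.act g x)
  cond_iii : ∀ g, β.D g = ⋃ h ∈ {h : G | 𝒢.r h = 𝒢.r g}, β.act h '' (i '' α.D (𝒢.d h))

/-!
Along a globalization, `x` and `i x` have the same stabilizer, and every point of `Y` lies in the
orbit of some `i x`. An arrow `k` taking `i x` to `y` conjugates the stabilizer of `y` into that of
`i x`, so the stabilizer of `y` consists of identities as soon as that of `x` does.
-/

namespace SetGroupoid

variable {G : Type u} {𝒢 : SetGroupoid G} {g h k : G}

theorem d_r (g : G) : 𝒢.d (𝒢.r g) = 𝒢.r g := by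
  rw [← 𝒢.d_inv, 𝒢.d_idem]

theorem mul_inv_cancel_right (hgh : 𝒢.d g = 𝒢.r h) : 𝒢.mul (𝒢.mul g h) (𝒢.inv h) = g := by
  rw [𝒢.mul_assoc g h _ hgh (𝒢.r_inv h).symm, 𝒢.mul_inv, ← hgh, 𝒢.mul_d_self]

theorem inv_mul_cancel_left (hgh : 𝒢.d g = 𝒢.r h) : 𝒢.mul (𝒢.inv g) (𝒢.mul g h) = h := by
  rw [← 𝒢.mul_assoc _ g h (𝒢.d_inv g) hgh, 𝒢.inv_mul, hgh, 𝒢.r_mul_self]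

theorem eq_inv_of_mul_eq_r (hgh : 𝒢.d g = 𝒢.r h) (hmul : 𝒢.mul g h = 𝒢.r g) :
    h = 𝒢.inv g := by
  rw [← inv_mul_cancel_left hgh, hmul, ← 𝒢.d_inv, 𝒢.mul_d_self]

theorem mul_inv_rev (hgh : 𝒢.d g = 𝒢.r h) :
    𝒢.inv (𝒢.mul g h) = 𝒢.mul (𝒢.inv h) (𝒢.inv g) := by
  have hinv : 𝒢.d (𝒢.inv h) = 𝒢.r (𝒢.inv g) := by rw [𝒢.d_inv, 𝒢.r_inv, hgh]
  have hd : 𝒢.d (𝒢.mul g h) = 𝒢.r (𝒢.inv h) := by rw [𝒢.d_mul g h hgh, 𝒢.r_inv]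
  refine (eq_inv_of_mul_eq_r ?_ ?_).symm
  · rw [hd, 𝒢.r_mul _ _ hinv]
  · rw [← 𝒢.mul_assoc _ _ _ hd hinv, mul_inv_cancel_right hgh, 𝒢.mul_inv, 𝒢.r_mul g h hgh]

theorem d_eq_self_of_conj (hd : 𝒢.d g = 𝒢.r k) (hr : 𝒢.r g = 𝒢.r k)
    (hconj : 𝒢.d (𝒢.mul (𝒢.inv k) (𝒢.mul g k)) = 𝒢.mul (𝒢.inv k) (𝒢.mul g k)) :
    𝒢.d g = g := by
  have hcomp : 𝒢.d (𝒢.inv k) = 𝒢.r (𝒢.mul g k) := by rw [𝒢.d_inv, 𝒢.r_mul g k hd, hr]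
  have hfix : 𝒢.mul g k = k := by
    rw [eq_inv_of_mul_eq_r hcomp, 𝒢.inv_inv]
    rw [← hconj, 𝒢.d_mul _ _ hcomp, 𝒢.d_mul g k hd, 𝒢.r_inv]
  calc
    𝒢.d g = 𝒢.mul (𝒢.mul g k) (𝒢.inv k) := by rw [hfix, 𝒢.mul_inv, hd]
    _ = g := mul_inv_cancel_right hd

end SetGroupoid

namespace PartialAction

variable {G : Type u} {X : Type v} {𝒢 : SetGroupoid G}
  {α : PartialAction 𝒢 X} {g h k : G} {x y z : X}

/-- The arrows that take `x` to `y`. Since `act` is totalized, membership of `x` in the domain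
`X_{g⁻¹}` is part of the condition. -/
def transporter (α : PartialAction 𝒢 X) (x y : X) : Set G :=
  {g | x ∈ α.D (𝒢.inv g) ∧ α.act g x = y}

/-- The stabilizer `stab_α(x)`, that is, the arrows taking `x` to itself. -/
def stabilizer (α : PartialAction 𝒢 X) (x : X) : Set G :=
  α.transporter x x

theorem r_eq_anchor_of_mem_D (hx : x ∈ α.D g) : 𝒢.r g = α.anchor x :=
  α.anchor_unique x _ (SetGroupoid.d_r g) (α.D_subset g hx)

theorem d_eq_anchor_of_mem_transporter (hg : g ∈ α.transporter x y) : 𝒢.d g = α.anchor x := by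
  rw [← 𝒢.r_inv, r_eq_anchor_of_mem_D hg.1]

theorem mem_D_of_mem_transporter (hg : g ∈ α.transporter x y) : y ∈ α.D g :=
  hg.2 ▸ α.act_mem g x hg.1

theorem r_eq_anchor_of_mem_transporter (hg : g ∈ α.transporter x y) : 𝒢.r g = α.anchor y :=
  r_eq_anchor_of_mem_D (mem_D_of_mem_transporter hg)

theorem inv_mem_transporter (hg : g ∈ α.transporter x y) : 𝒢.inv g ∈ α.transporter y x := by
  refine ⟨?_, ?_⟩
  · rw [𝒢.inv_inv]
    exact mem_D_of_mem_transporter hg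
  · rw [← hg.2, α.act_act g x hg.1]

theorem mul_mem_transporter (hg : g ∈ α.transporter y z) (hh : h ∈ α.transporter x y) :
    𝒢.mul g h ∈ α.transporter x z := by
  have hgh : 𝒢.d g = 𝒢.r h :=
    (d_eq_anchor_of_mem_transporter hg).trans (r_eq_anchor_of_mem_transporter hh).symm
  have hinv : 𝒢.d (𝒢.inv h) = 𝒢.r (𝒢.inv g) := by rw [𝒢.d_inv, 𝒢.r_inv, hgh]
  obtain ⟨hy, hyx⟩ := inv_mem_transporter hh
  refine ⟨?_, ?_⟩
  · rw [SetGroupoid.mul_inv_rev hgh, ← hyx]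
    exact α.act_comp_mem _ _ hinv y hy hg.1
  · rw [← α.act_comp g h hgh x hh.1 (hh.2.symm ▸ hg.1), hh.2, hg.2]

theorem conj_mem_stabilizer (hk : k ∈ α.transporter x y) (hg : g ∈ α.stabilizer y) :
    𝒢.mul (𝒢.inv k) (𝒢.mul g k) ∈ α.stabilizer x :=
  mul_mem_transporter (inv_mem_transporter hk) (mul_mem_transporter hg hk)

theorem free_iff_forall_stabilizer_d_eq_self :
    α.Free ↔ ∀ x, ∀ g ∈ α.stabilizer x, 𝒢.d g = g := by
  refine ⟨fun hα x g hg ↦ ?_, fun hunit x g hx hgx ↦ ?_⟩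
  · rw [d_eq_anchor_of_mem_transporter hg, ← hα x g hg.1 hg.2]
  · have hg : g ∈ α.stabilizer x := ⟨hx, hgx⟩
    rw [← d_eq_anchor_of_mem_transporter hg, hunit x g hg]

theorem stabilizer_d_eq_self_of_mem_transporter (hk : k ∈ α.transporter x y)
    (hunit : ∀ g ∈ α.stabilizer x, 𝒢.d g = g) : ∀ g ∈ α.stabilizer y, 𝒢.d g = g := by
  intro g hg
  have hrk : 𝒢.r k = α.anchor y := r_eq_anchor_of_mem_transporter hk
  exact SetGroupoid.d_eq_self_of_conj
    ((d_eq_anchor_of_mem_transporter hg).trans hrk.symm)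
    ((r_eq_anchor_of_mem_transporter hg).trans hrk.symm)
    (hunit _ (conj_mem_stabilizer hk hg))

end PartialAction

namespace IsGlobalization

variable {G : Type u} {X : Type v} {Y : Type w} {𝒢 : SetGroupoid G}
  {α : PartialAction 𝒢 X} {β : PartialAction 𝒢 Y} {i : X → Y} {g k : G} {x : X}

theorem map_mem_D (h : IsGlobalization α β i) (hx : x ∈ α.D g) : i x ∈ β.D g := by
  have himage : i x ∈ i '' α.D g := Set.mem_image_of_mem i hx
  rw [h.cond_i] at himage
  obtain ⟨-, y, ⟨-, hy⟩, hyx⟩ := himage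
  exact hyx ▸ β.act_mem g y hy

theorem transporter_map (h : IsGlobalization α β i) (x x' : X) :
    β.transporter (i x) (i x') = α.transporter x x' := by
  ext g
  refine ⟨fun hg ↦ ?_, fun hg ↦ ⟨h.map_mem_D hg.1, ?_⟩⟩
  · obtain ⟨hx', hx'x⟩ := PartialAction.inv_mem_transporter hg
    have hx : x ∈ α.D (𝒢.inv g) := by
      rw [← h.inj.mem_set_image, h.cond_i]
      exact ⟨⟨x, rfl⟩, i x', ⟨⟨x', rfl⟩, hx'⟩, hx'x⟩
    exact ⟨hx, h.inj ((h.cond_ii g x hx).symm.trans hg.2)⟩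
  · rw [h.cond_ii g x hg.1, hg.2]

theorem stabilizer_map (h : IsGlobalization α β i) (x : X) :
    β.stabilizer (i x) = α.stabilizer x :=
  h.transporter_map x x

theorem D_eq_of_r_eq (h : IsGlobalization α β i) (hr : 𝒢.r g = 𝒢.r k) : β.D g = β.D k := by
  rw [h.cond_iii g, h.cond_iii k, hr]

theorem exists_transporter_nonempty (h : IsGlobalization α β i) (y : Y) :
    ∃ x, (β.transporter (i x) y).Nonempty := by
  have hy := β.mem_anchor y
  rw [h.cond_iii] at hy
  simp only [Set.mem_iUnion] at hy
  obtain ⟨k, -, -, ⟨x, hx, rfl⟩, hkx⟩ := hy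
  have hr : 𝒢.r (𝒢.inv k) = 𝒢.r (𝒢.d k) := by rw [𝒢.r_inv, 𝒢.r_d]
  exact ⟨x, k, h.D_eq_of_r_eq hr ▸ h.map_mem_D hx, hkx⟩

end IsGlobalization

theorem free_iff_globalization_free_general {G : Type u} {X : Type v} {Y : Type w}
    {𝒢 : SetGroupoid G} {α : PartialAction 𝒢 X} {β : PartialAction 𝒢 Y} {i : X → Y}
    (hstab : ∀ x, β.stabilizer (i x) = α.stabilizer x)
    (horbit : ∀ y, ∃ x, (β.transporter (i x) y).Nonempty) :
    α.Free ↔ β.Free := by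
  simp only [PartialAction.free_iff_forall_stabilizer_d_eq_self, ← hstab]
  refine ⟨fun hα y ↦ ?_, fun hβ x ↦ hβ (i x)⟩
  obtain ⟨x, k, hk⟩ := horbit y
  exact PartialAction.stabilizer_d_eq_self_of_mem_transporter hk (hα x)

/-- If the global action `β` of `G` on `Y` is a globalization of the
partial action `α` of `G` on `X`, then `α` is free iff `β` is free. -/
theorem free_iff_globalization_free {G : Type u} {X : Type v} {Y : Type w}
    {𝒢 : SetGroupoid G} (α : PartialAction 𝒢 X) (β : PartialAction 𝒢 Y) (i : X → Y)
    (h : IsGlobalization α β i) :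
    α.Free ↔ β.Free :=
  free_iff_globalization_free_general h.stabilizer_map h.exists_transporter_nonempty
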